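/- arXiv:1906.03021 — 3 statements merged into one kernel-verified Lean document; each statement's English description precedes it below -/
import Mathlib

section
/- For i = 1,…,N let χ_i : ℝ → ℝ be continuous one-dimensional kernels, i.e. χ_i ∈ L¹(ℝ), ∑_{k∈ℤ} χ_i(u−k) = 1 for all u ∈ ℝ, and A_{χ_i} := sup_{u∈ℝ} ∑_{k∈ℤ} |χ_i(u−k)| < +∞ with the series converging uniformly on compact sets. Let m ∈ ℕ, m ≥ 1, let χ̄_{i,m}(t) := (1/m)∫_{-m/2}^{m/2} χ_i(t+v) dv, and let f : ℝ^N → ℝ satisfy |f| ≤ M. Then for every w > 0, m ∈ ℕ, j = 1,…,N and every t ∈ ℝ^N, the sampling series (S̄^m_w f)(t) := ∑_{k∈ℤ^N} f(k/w) ∏_{i=1}^N χ̄_{i,m}(w t_i − k_i) has a partial derivative with respect to t_j at t, given by ∂(S̄^m_w f)/∂t_j (t) = (w/m) ∑_{k∈ℤ^N} f(k/w) ∏_{i≠j} χ̄_{i,m}(w t_i − k_i) [χ_j(w t_j − k_j + m/2) − χ_j(w t_j − k_j − m/2)], and moreover |∂(S̄^m_w f)/∂t_j (t)| ≤ (2w/m)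 M ∏_{i=1}^N A_{χ_i}. -/
open MeasureTheory

/-- The averaged kernel `χ̄_m(t) := (1/m) ∫_{-m/2}^{m/2} χ(t+v) dv`. -/
noncomputable def avgKernel (χ : ℝ → ℝ) (m : ℕ) (t : ℝ) : ℝ :=
  (1 / (m : ℝ)) * ∫ v in (-(m : ℝ) / 2)..((m : ℝ) / 2), χ (t + v)

/-! Differentiating under the sum needs the series of derivatives to converge locally uniformly in
the variable `t_j`. Those derivatives are dominated by the product over `i` of the one-dimensional
series `∑ₖ |χ̄_{i,m}(w t_i - k)|`, `i ≠ j`, and `∑ₖ |χ_j(w t_j ± m/2 - k)|`. The product is summable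
over `ℤ^N` with a sum continuous in `t_j`, so by Dini's theorem it converges locally uniformly, and
domination passes this on to the series of derivatives. Since averaging does not increase
`sup_u ∑ₖ |χ(u - k)|`, the same domination bounds the derivative. -/

open Filter Topology

section DominatedSeries

variable {κ X E : Type*} [NormedAddCommGroup E] [CompleteSpace E]

theorem norm_tsum_sub_sum_le_of_norm_bounded {f : κ → E} {g : κ → ℝ} {b : ℝ} (hg : HasSum g b)
    (hfg : ∀ k, ‖f k‖ ≤ g k) (s : Finset κ) :
    ‖∑' k, f k - ∑ k ∈ s, f k‖ ≤ b - ∑ k ∈ s, g k := by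
  have hf : Summable f := .of_norm_bounded hg.summable hfg
  rw [← hf.sum_add_tsum_subtype_compl s, ← hg.tsum_eq,
    ← hg.summable.sum_add_tsum_subtype_compl s, add_sub_cancel_left, add_sub_cancel_left]
  exact tsum_of_norm_bounded (hg.summable.subtype _).hasSum fun k => hfg k

theorem tendstoLocallyUniformly_tsum_of_norm_le [TopologicalSpace X] {f : κ → X → E}
    {g : κ → X → ℝ} {G : X → ℝ} (hg : ∀ k, Continuous (g k)) (hG : Continuous G)
    (hgG : ∀ x, HasSum (fun k => g k x) (G x)) (hfg : ∀ k x, ‖f k x‖ ≤ g k x) :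
    TendstoLocallyUniformly (fun s : Finset κ => fun x => ∑ k ∈ s, f k x)
      (fun x => ∑' k, f k x) atTop := by
  have hDini : TendstoLocallyUniformly (fun s : Finset κ => fun x => ∑ k ∈ s, g k x) G atTop :=
    Monotone.tendstoLocallyUniformly_of_forall_tendsto
      (fun s => continuous_finsetSum s fun k _ => hg k)
      (fun _ _ hst x => Finset.sum_le_sum_of_subset_of_nonneg hst fun k _ _ =>
        (norm_nonneg _).trans (hfg k x))
      hG hgG
  rw [Metric.tendstoLocallyUniformly_iff] at hDini ⊢
  intro ε hε x
  obtain ⟨U, hU, hUε⟩ := hDini ε hε x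
  refine ⟨U, hU, hUε.mono fun s hs y hy => ?_⟩
  calc dist (∑' k, f k y) (∑ k ∈ s, f k y)
      ≤ G y - ∑ k ∈ s, g k y := by
        rw [dist_eq_norm]
        exact norm_tsum_sub_sum_le_of_norm_bounded (hgG y) (hfg · y) s
    _ ≤ dist (G y) (∑ k ∈ s, g k y) := le_abs_self _
    _ < ε := hs y hy

theorem hasDerivAt_tsum_of_norm_le {𝕜 : Type*} [RCLike 𝕜] [NormedSpace 𝕜 E]
    {f f' : κ → 𝕜 → E} {g : κ → 𝕜 → ℝ} {G : 𝕜 → ℝ} (hg : ∀ k, Continuous (g k))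
    (hG : Continuous G) (hgG : ∀ x, HasSum (fun k => g k x) (G x))
    (hf : ∀ k x, HasDerivAt (f k) (f' k x) x) (hfg : ∀ k x, ‖f' k x‖ ≤ g k x)
    (hsum : ∀ x, Summable fun k => f k x) (x : 𝕜) :
    HasDerivAt (fun y => ∑' k, f k y) (∑' k, f' k x) x :=
  hasDerivAt_of_tendstoLocallyUniformlyOn (f := fun s : Finset κ => fun y => ∑ k ∈ s, f k y)
    (g' := fun y => ∑' k, f' k y) isOpen_univ
    (tendstoLocallyUniformly_tsum_of_norm_le hg hG hgG hfg).tendstoLocallyUniformlyOn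
    (.of_forall fun _ y _ => .fun_sum fun k _ => hf k y)
    (fun y _ => (hsum y).hasSum) (Set.mem_univ x)

end DominatedSeries

section ProductSeries

theorem abs_mul_prod_mul_le {ι : Type*} {s : Finset ι} {x M d e : ℝ} {b : ι → ℝ} (hx : |x| ≤ M)
    (hde : |d| ≤ e) : |x * (∏ i ∈ s, b i) * d| ≤ M * ((∏ i ∈ s, |b i|) * e) := by
  rw [mul_assoc, abs_mul, abs_mul, Finset.abs_prod]
  have hM : 0 ≤ M := (abs_nonneg x).trans hx
  gcongr

variable {ι : Type*} [Fintype ι]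

theorem hasSum_fintype_prod {κ : ι → Type*} {g : ∀ i, κ i → ℝ} {b : ι → ℝ}
    (hg : ∀ i k, 0 ≤ g i k) (hb : ∀ i, HasSum (g i) (b i)) :
    HasSum (fun k : ∀ i, κ i => ∏ i, g i (k i)) (∏ i, b i) := by
  classical
  have hnonneg (k : ∀ i, κ i) : 0 ≤ ∏ i, g i (k i) := Finset.prod_nonneg fun i _ => hg i (k i)
  have hbox (s : ∀ i, Finset (κ i)) :
      ∑ k ∈ Fintype.piFinset s, ∏ i, g i (k i) = ∏ i, ∑ k ∈ s i, g i k :=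
    (Finset.prod_univ_sum s g).symm
  have hsubset (T : Finset (∀ i, κ i)) : T ⊆ Fintype.piFinset fun i => T.image (· i) :=
    fun k hk => Fintype.mem_piFinset.2 fun i => Finset.mem_image_of_mem (· i) hk
  have hsummable : Summable fun k : ∀ i, κ i => ∏ i, g i (k i) := by
    refine summable_of_sum_le hnonneg (c := ∏ i, b i) fun T => ?_
    calc ∑ k ∈ T, ∏ i, g i (k i)
        ≤ ∑ k ∈ Fintype.piFinset fun i => T.image (· i), ∏ i, g i (k i) :=
          Finset.sum_le_sum_of_subset_of_nonneg (hsubset T) fun k _ _ => hnonneg k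
      _ = ∏ i, ∑ k ∈ T.image (· i), g i k := hbox _
      _ ≤ ∏ i, b i := Finset.prod_le_prod (fun i _ => Finset.sum_nonneg fun k _ => hg i k)
          fun i _ => sum_le_hasSum _ (fun k _ => hg i k) (hb i)
  have hboxes : Tendsto (Fintype.piFinset : (∀ i, Finset (κ i)) → _) atTop atTop :=
    tendsto_atTop_finset_of_monotone (fun s t hst => Fintype.piFinset_subset s t hst)
      fun k => ⟨fun i => {k i}, Fintype.mem_piFinset.2 fun i => Finset.mem_singleton_self (k i)⟩
  have hcoord (i : ι) : Tendsto (fun s : ∀ i, Finset (κ i) => s i) atTop atTop :=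
    Monotone.tendsto_atTop_atTop (fun _ _ hst => hst i)
      fun s => ⟨Function.update (fun _ => ∅) i s, by simp⟩
  have hlim : Tendsto (fun s : ∀ i, Finset (κ i) => ∏ i, ∑ k ∈ s i, g i k) atTop
      (𝓝 (∏ i, b i)) :=
    tendsto_finsetProd _ fun i _ => (hb i).comp (hcoord i)
  have htsum : ∑' k : ∀ i, κ i, ∏ i, g i (k i) = ∏ i, b i :=
    tendsto_nhds_unique ((hsummable.hasSum.comp hboxes).congr hbox) hlim
  exact htsum ▸ hsummable.hasSum

variable [DecidableEq ι]

theorem prod_apply_update {α M : Type*} [CommMonoid M] (φ : ι → α → M) (x : ι → α)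
    (j : ι) (y : α) :
    ∏ i, φ i (Function.update x j y i) = (∏ i ∈ Finset.univ.erase j, φ i (x i)) * φ j y := by
  rw [← Finset.prod_erase_mul _ _ (Finset.mem_univ j), Function.update_self]
  congr 1
  exact Finset.prod_congr rfl fun i hi => by rw [Function.update_of_ne (Finset.ne_of_mem_erase hi)]

theorem hasSum_prod_erase_mul {κ : Type*} {g : ι → κ → ℝ} {b : ι → ℝ} {d : κ → ℝ} {c : ℝ} (j : ι)
    (hg : ∀ i k, 0 ≤ g i k) (hb : ∀ i, HasSum (g i) (b i)) (hd : ∀ k, 0 ≤ d k)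
    (hc : HasSum d c) :
    HasSum (fun k : ι → κ => (∏ i ∈ Finset.univ.erase j, g i (k i)) * d (k j))
      ((∏ i ∈ Finset.univ.erase j, b i) * c) := by
  have hsum := hasSum_fintype_prod (g := Function.update g j d) (b := Function.update b j c)
    (fun i k => by obtain rfl | hij := eq_or_ne i j <;> simp [*])
    (fun i => by obtain rfl | hij := eq_or_ne i j <;> simp [*])
  rw [prod_apply_update fun _ r => r] at hsum
  exact hsum.congr_fun fun k => (prod_apply_update (fun i φ => φ (k i)) g j d).symm

variable {κ : Type*} {a : (ι → κ) → ℝ} {M : ℝ} {b : ι → κ → ℝ} {B : ι → ℝ}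

theorem summable_mul_prod_erase_mul {d : κ → ℝ} (ha : ∀ k, |a k| ≤ M)
    (hb : ∀ i, Summable fun k => |b i k|) (hd : Summable fun k => |d k|) (j : ι) :
    Summable fun k : ι → κ => a k * (∏ i ∈ Finset.univ.erase j, b i (k i)) * d (k j) :=
  .of_norm_bounded
    ((hasSum_prod_erase_mul j (fun _ _ => abs_nonneg _) (fun i => (hb i).hasSum)
      (fun _ => abs_nonneg _) hd.hasSum).summable.mul_left M)
    fun k => abs_mul_prod_mul_le (ha k) le_rfl

theorem abs_tsum_mul_prod_erase_mul_le {d e : κ → ℝ} {D : ℝ} (ha : ∀ k, |a k| ≤ M)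
    (hb : ∀ i, HasSum (fun k => |b i k|) (B i)) (hde : ∀ k, |d k| ≤ e k) (he : HasSum e D)
    (j : ι) :
    |∑' k : ι → κ, a k * (∏ i ∈ Finset.univ.erase j, b i (k i)) * d (k j)| ≤
      M * ((∏ i ∈ Finset.univ.erase j, B i) * D) :=
  tsum_of_norm_bounded (E := ℝ)
    ((hasSum_prod_erase_mul j (fun _ _ => abs_nonneg _) hb
      (fun k => (abs_nonneg _).trans (hde k)) he).mul_left M)
    fun k => abs_mul_prod_mul_le (ha k) (hde (k j))

theorem hasDerivAt_tsum_mul_prod_erase_mul {d d' e : κ → ℝ → ℝ} {D : ℝ → ℝ}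
    (ha : ∀ k, |a k| ≤ M) (hb : ∀ i, Summable fun k => |b i k|)
    (he : ∀ k, Continuous (e k)) (hD : Continuous D) (heD : ∀ u, HasSum (fun k => e k u) (D u))
    (hd : ∀ k u, HasDerivAt (d k) (d' k u) u) (hde : ∀ k u, |d' k u| ≤ e k u)
    (hsum : ∀ u, Summable fun k => |d k u|) (j : ι) (u : ℝ) :
    HasDerivAt
      (fun u => ∑' k : ι → κ, a k * (∏ i ∈ Finset.univ.erase j, b i (k i)) * d (k j) u)
      (∑' k : ι → κ, a k * (∏ i ∈ Finset.univ.erase j, b i (k i)) * d' (k j) u) u :=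
  hasDerivAt_tsum_of_norm_le
    (f := fun k u => a k * (∏ i ∈ Finset.univ.erase j, b i (k i)) * d (k j) u)
    (f' := fun k u => a k * (∏ i ∈ Finset.univ.erase j, b i (k i)) * d' (k j) u)
    (fun k => continuous_const.mul (continuous_const.mul (he (k j))))
    (continuous_const.mul (continuous_const.mul hD))
    (fun u => (hasSum_prod_erase_mul j (fun _ _ => abs_nonneg _) (fun i => (hb i).hasSum)
      (fun k => (abs_nonneg _).trans (hde k u)) (heD u)).mul_left M)
    (fun k u => (hd (k j) u).const_mul _)
    (fun k u => abs_mul_prod_mul_le (ha k) (hde (k j) u))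
    (fun u => summable_mul_prod_erase_mul ha hb (hsum u) j) u

end ProductSeries

/-- The sum `∑ₖ |χ(u - k)|` of the absolute values of the integer translates of `χ`. -/
noncomputable def absTranslateSum (χ : ℝ → ℝ) (u : ℝ) : ℝ :=
  ∑' k : ℤ, |χ (u - (k : ℝ))|

/-- The discrete absolute moment `A_χ = sup_u ∑ₖ |χ(u - k)|` of order zero. -/
noncomputable def absMoment (χ : ℝ → ℝ) : ℝ :=
  ⨆ u : ℝ, absTranslateSum χ u

/-- A continuous function satisfying condition `(χ₂)`. Continuity of the sum is, by Dini's theorem,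
the same as uniform convergence of the series on compact sets, and the sum is then bounded because
it is periodic. -/
structure IsSamplingKernel (χ : ℝ → ℝ) : Prop where
  continuous : Continuous χ
  summable_abs (u : ℝ) : Summable fun k : ℤ => |χ (u - (k : ℝ))|
  continuous_absTranslateSum : Continuous (absTranslateSum χ)

/-- The central difference of `χ` with step `r`, which is the derivative of the integral of `χ` over
a window of width `r` as the window moves. -/
noncomputable def centralDiff (χ : ℝ → ℝ) (r t : ℝ) : ℝ :=
  χ (t + r / 2) - χ (t - r / 2)

theorem absTranslateSum_periodic (χ : ℝ → ℝ) : Function.Periodic (absTranslateSum χ) 1 := by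
  intro u
  rw [absTranslateSum, absTranslateSum, ← (Equiv.addRight (1 : ℤ)).tsum_eq]
  simp only [Equiv.coe_addRight, Int.cast_add, Int.cast_one, add_sub_add_right_eq_sub]

theorem abs_centralDiff_sub_le (χ : ℝ → ℝ) (r u v : ℝ) :
    |centralDiff χ r (u - v)| ≤ |χ (u + r / 2 - v)| + |χ (u - r / 2 - v)| := by
  rw [centralDiff, sub_add_eq_add_sub, sub_right_comm]
  exact abs_sub _ _

theorem hasDerivAt_avgKernel {χ : ℝ → ℝ} (hχ : Continuous χ) (m : ℕ) (t : ℝ) :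
    HasDerivAt (avgKernel χ m) (centralDiff χ m t / m) t := by
  have hprimitive : avgKernel χ m = fun s =>
      1 / (m : ℝ) * ((∫ x in (0 : ℝ)..(s + m / 2), χ x) - ∫ x in (0 : ℝ)..(s - m / 2), χ x) := by
    funext s
    rw [avgKernel, intervalIntegral.integral_comp_add_left, neg_div, ← sub_eq_add_neg,
      intervalIntegral.integral_interval_sub_left (hχ.intervalIntegrable _ _)
        (hχ.intervalIntegrable _ _)]
  have hFTC (x : ℝ) : HasDerivAt (fun y => ∫ x in (0 : ℝ)..y, χ x) (χ x) x :=
    (hχ.integral_hasStrictDerivAt 0 x).hasDerivAt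
  rw [hprimitive]
  exact ((((hFTC _).comp_add_const t _).fun_sub ((hFTC _).comp_sub_const t _)).const_mul
    _).congr_deriv (one_div_mul_eq_div _ _)

theorem abs_avgKernel_le (χ : ℝ → ℝ) (m : ℕ) (t : ℝ) :
    |avgKernel χ m t| ≤ avgKernel (fun x => |χ x|) m t := by
  have hwindow : -(m : ℝ) / 2 ≤ m / 2 := by linarith [m.cast_nonneg (α := ℝ)]
  rw [avgKernel, avgKernel, abs_mul, abs_of_nonneg (by positivity)]
  gcongr
  exact intervalIntegral.abs_integral_le_integral_abs hwindow

namespace IsSamplingKernel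

variable {χ : ℝ → ℝ}

theorem of_tendstoUniformlyOn (hc : Continuous χ)
    (hunif : ∀ K : Set ℝ, IsCompact K →
      TendstoUniformlyOn (fun (s : Finset ℤ) (u : ℝ) => ∑ k ∈ s, |χ (u - (k : ℝ))|)
        (absTranslateSum χ) atTop K) :
    IsSamplingKernel χ where
  continuous := hc
  summable_abs u :=
    ⟨_, (hunif {u} isCompact_singleton).tendsto_at (Set.mem_singleton u)⟩
  continuous_absTranslateSum :=
    (tendstoLocallyUniformly_iff_forall_isCompact.2 hunif).continuous
      (.of_forall fun _ => by fun_prop)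

theorem absTranslateSum_le_absMoment (hχ : IsSamplingKernel χ) (u : ℝ) :
    absTranslateSum χ u ≤ absMoment χ :=
  le_ciSup ((absTranslateSum_periodic χ).compact_of_continuous one_ne_zero
    hχ.continuous_absTranslateSum).bddAbove u

theorem sum_abs_avgKernel_le (hχ : IsSamplingKernel χ) {m : ℕ} (hm : 1 ≤ m) (s : Finset ℤ)
    (u : ℝ) : ∑ k ∈ s, |avgKernel χ m (u - k)| ≤ absMoment χ := by
  have hcont := hχ.continuous
  have hm₀ : (0 : ℝ) < m := by exact_mod_cast hm
  have hpartial (v : ℝ) : ∑ k ∈ s, |χ (u - k + v)| ≤ absMoment χ := by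
    simp only [sub_add_eq_add_sub]
    exact ((hχ.summable_abs (u + v)).sum_le_tsum s fun _ _ => abs_nonneg _).trans
      (hχ.absTranslateSum_le_absMoment (u + v))
  calc ∑ k ∈ s, |avgKernel χ m (u - k)|
      ≤ ∑ k ∈ s, avgKernel (fun x => |χ x|) m (u - k) :=
        Finset.sum_le_sum fun k _ => abs_avgKernel_le χ m _
    _ = 1 / m * ∫ v in (-(m : ℝ) / 2)..(m / 2), ∑ k ∈ s, |χ (u - k + v)| := by
        rw [intervalIntegral.integral_finsetSum fun k _ =>
          (by fun_prop : Continuous _).intervalIntegrable _ _, Finset.mul_sum]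
        rfl
    _ ≤ 1 / m * ∫ _ in (-(m : ℝ) / 2)..(m / 2), absMoment χ := by
        gcongr
        exact intervalIntegral.integral_mono (by linarith)
          ((by fun_prop : Continuous _).intervalIntegrable _ _)
          intervalIntegrable_const hpartial
    _ = absMoment χ := by
        rw [intervalIntegral.integral_const, smul_eq_mul]
        field_simp
        ring

theorem summable_abs_avgKernel (hχ : IsSamplingKernel χ) {m : ℕ} (hm : 1 ≤ m) (u : ℝ) :
    Summable fun k : ℤ => |avgKernel χ m (u - k)| :=
  summable_of_sum_le (fun _ => abs_nonneg _) fun s => hχ.sum_abs_avgKernel_le hm s u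

theorem absTranslateSum_avgKernel_le (hχ : IsSamplingKernel χ) {m : ℕ} (hm : 1 ≤ m) (u : ℝ) :
    absTranslateSum (avgKernel χ m) u ≤ absMoment χ :=
  (hχ.summable_abs_avgKernel hm u).tsum_le_of_sum_le fun s => hχ.sum_abs_avgKernel_le hm s u

theorem hasSum_abs_add_abs (hχ : IsSamplingKernel χ) (u v : ℝ) :
    HasSum (fun k : ℤ => |χ (u - k)| + |χ (v - k)|) (absTranslateSum χ u + absTranslateSum χ v) :=
  (hχ.summable_abs u).hasSum.add (hχ.summable_abs v).hasSum

end IsSamplingKernel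

section SamplingSeries

variable {ι : Type*} [Fintype ι]

/-- The sampling series `∑ₖ a(k) ∏ᵢ χ̄_{i,m}(w tᵢ - kᵢ)` of the product averaged kernel, with
arbitrary coefficients `a(k)` in place of the sample values `f(k/w)`. -/
noncomputable def avgSamplingSeries (χ : ι → ℝ → ℝ) (m : ℕ) (a : (ι → ℤ) → ℝ) (w : ℝ)
    (t : ι → ℝ) : ℝ :=
  ∑' k : ι → ℤ, a k * ∏ i, avgKernel (χ i) m (w * t i - (k i : ℝ))

variable [DecidableEq ι]

/-- The termwise `j`-th partial derivative of `avgSamplingSeries`. -/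
noncomputable def avgSamplingSeriesPartial (χ : ι → ℝ → ℝ) (m : ℕ) (a : (ι → ℤ) → ℝ) (w : ℝ)
    (j : ι) (t : ι → ℝ) : ℝ :=
  w / (m : ℝ) * ∑' k : ι → ℤ, a k *
    (∏ i ∈ Finset.univ.erase j, avgKernel (χ i) m (w * t i - (k i : ℝ))) *
    centralDiff (χ j) m (w * t j - (k j : ℝ))

variable {χ : ι → ℝ → ℝ} {m : ℕ} {a : (ι → ℤ) → ℝ} {M : ℝ}

theorem avgSamplingSeries_update (w s : ℝ) (j : ι) (t : ι → ℝ) :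
    avgSamplingSeries χ m a w (Function.update t j s) =
      ∑' k : ι → ℤ, a k * (∏ i ∈ Finset.univ.erase j, avgKernel (χ i) m (w * t i - (k i : ℝ))) *
        avgKernel (χ j) m (w * s - (k j : ℝ)) := by
  refine tsum_congr fun k => ?_
  rw [prod_apply_update fun i y => avgKernel (χ i) m (w * y - (k i : ℝ)), mul_assoc]

theorem hasDerivAt_avgSamplingSeries_update (hχ : ∀ i, IsSamplingKernel (χ i)) (hm : 1 ≤ m)
    (ha : ∀ k, |a k| ≤ M) (w : ℝ) (j : ι) (t : ι → ℝ) :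
    HasDerivAt (fun s => avgSamplingSeries χ m a w (Function.update t j s))
      (avgSamplingSeriesPartial χ m a w j t) (t j) := by
  have hχc := (hχ j).continuous
  have hSc := (hχ j).continuous_absTranslateSum
  have hmajorant (l : ℤ) (u : ℝ) : |centralDiff (χ j) m (u - l) / m| ≤
      (|χ j (u + m / 2 - l)| + |χ j (u - m / 2 - l)|) / m := by
    rw [abs_div, Nat.abs_cast]
    gcongr
    exact abs_centralDiff_sub_le _ _ _ _
  have hseries := hasDerivAt_tsum_mul_prod_erase_mul
    (b := fun i (l : ℤ) => avgKernel (χ i) m (w * t i - (l : ℝ)))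
    (d := fun (l : ℤ) u => avgKernel (χ j) m (u - (l : ℝ)))
    ha (fun i => (hχ i).summable_abs_avgKernel hm _)
    (fun l => by fun_prop) (by fun_prop)
    (fun u => ((hχ j).hasSum_abs_add_abs (u + m / 2) (u - m / 2)).div_const (m : ℝ))
    (fun l u => (hasDerivAt_avgKernel hχc m (u - l)).comp_sub_const u l) hmajorant
    (fun u => (hχ j).summable_abs_avgKernel hm u) j (w * t j)
  simp only [avgSamplingSeries_update]
  refine (hseries.comp (t j) ((hasDerivAt_id (t j)).const_mul w)).congr_deriv ?_
  simp only [avgSamplingSeriesPartial, ← mul_div_assoc, tsum_div_const]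
  ring

theorem abs_avgSamplingSeriesPartial_le (hχ : ∀ i, IsSamplingKernel (χ i)) (hm : 1 ≤ m)
    (ha : ∀ k, |a k| ≤ M) (w : ℝ) (j : ι) (t : ι → ℝ) :
    |avgSamplingSeriesPartial χ m a w j t| ≤ 2 * |w| / m * M * ∏ i, absMoment (χ i) := by
  have hM : 0 ≤ M := (abs_nonneg _).trans (ha 0)
  have hseries := abs_tsum_mul_prod_erase_mul_le
    (b := fun i (l : ℤ) => avgKernel (χ i) m (w * t i - (l : ℝ)))
    (d := fun l : ℤ => centralDiff (χ j) m (w * t j - (l : ℝ)))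
    ha (fun i => ((hχ i).summable_abs_avgKernel hm _).hasSum)
    (fun l => abs_centralDiff_sub_le _ _ _ _)
    ((hχ j).hasSum_abs_add_abs (w * t j + m / 2) (w * t j - m / 2)) j
  have hmoments :
      (∏ i ∈ Finset.univ.erase j, absTranslateSum (avgKernel (χ i) m) (w * t i)) *
        (absTranslateSum (χ j) (w * t j + m / 2) + absTranslateSum (χ j) (w * t j - m / 2)) ≤
      (∏ i ∈ Finset.univ.erase j, absMoment (χ i)) * (absMoment (χ j) + absMoment (χ j)) := by
    have hnonneg (ψ : ℝ → ℝ) (u : ℝ) : 0 ≤ absTranslateSum ψ u := tsum_nonneg fun _ => abs_nonneg _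
    have hA (i : ι) : 0 ≤ absMoment (χ i) := Real.iSup_nonneg fun u => hnonneg _ u
    gcongr with i
    · exact add_nonneg (hnonneg _ _) (hnonneg _ _)
    · exact Finset.prod_nonneg fun i _ => hA i
    · exact fun i _ => hnonneg _ _
    · exact (hχ i).absTranslateSum_avgKernel_le hm _
    · exact (hχ j).absTranslateSum_le_absMoment _
    · exact (hχ j).absTranslateSum_le_absMoment _
  calc |avgSamplingSeriesPartial χ m a w j t|
      ≤ |w| / m * (M * ((∏ i ∈ Finset.univ.erase j, absMoment (χ i)) *
          (absMoment (χ j) + absMoment (χ j)))) := by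
        rw [avgSamplingSeriesPartial, abs_mul, abs_div, Nat.abs_cast]
        gcongr
        exact hseries.trans (mul_le_mul_of_nonneg_left hmoments hM)
    _ = 2 * |w| / m * M * ∏ i, absMoment (χ i) := by
        rw [← Finset.prod_erase_mul _ _ (Finset.mem_univ j)]
        ring

theorem sampling_series_averaged_partial_deriv_general (hχ : ∀ i, IsSamplingKernel (χ i))
    (hm : 1 ≤ m) (ha : ∀ k, |a k| ≤ M) (w : ℝ) (j : ι) (t : ι → ℝ) :
    HasDerivAt (fun s => avgSamplingSeries χ m a w (Function.update t j s))
        (avgSamplingSeriesPartial χ m a w j t) (t j) ∧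
      |avgSamplingSeriesPartial χ m a w j t| ≤ 2 * |w| / m * M * ∏ i, absMoment (χ i) :=
  ⟨hasDerivAt_avgSamplingSeries_update hχ hm ha w j t,
    abs_avgSamplingSeriesPartial_le hχ hm ha w j t⟩

end SamplingSeries

/-- for continuous one-dimensional kernels `χ_1,…,χ_N`, `m ≥ 1` and `f` bounded
by `M`, the multivariate generalized sampling series based on the product averaged kernel
`(S̄^m_w f)(t) = ∑_{k∈ℤ^N} f(k/w) ∏_i χ̄_{i,m}(w t_i − k_i)` has, at every point `t` and for
every direction `j`, the partial derivative
`(w/m) ∑_{k∈ℤ^N} f(k/w) ∏_{i≠j} χ̄_{i,m}(w t_i − k_i)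
  [χ_j(w t_j − k_j + m/2) − χ_j(w t_j − k_j − m/2)]`,
whose absolute value is at most `(2w/m) M ∏_i A_{χ_i}`. -/
theorem sampling_series_averaged_partial_deriv
    (N : ℕ) (χ : Fin N → ℝ → ℝ)
    (hc : ∀ i, Continuous (χ i)) (hint : ∀ i, Integrable (χ i))
    (hpart : ∀ i, ∀ u : ℝ, HasSum (fun k : ℤ => χ i (u - (k : ℝ))) 1)
    (hsummable : ∀ i, ∀ u : ℝ, Summable fun k : ℤ => |χ i (u - (k : ℝ))|)
    (hunif : ∀ i, ∀ K : Set ℝ, IsCompact K →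
      TendstoUniformlyOn (fun (s : Finset ℤ) (u : ℝ) => ∑ k ∈ s, |χ i (u - (k : ℝ))|)
        (fun u => ∑' k : ℤ, |χ i (u - (k : ℝ))|) Filter.atTop K)
    (hbdd : ∀ i, BddAbove (Set.range fun u : ℝ => ∑' k : ℤ, |χ i (u - (k : ℝ))|))
    (m : ℕ) (hm : 1 ≤ m)
    (f : (Fin N → ℝ) → ℝ) (M : ℝ) (hf : ∀ t, |f t| ≤ M)
    (w : ℝ) (hw : 0 < w) (j : Fin N) (t : Fin N → ℝ) :
    HasDerivAt
      (fun s : ℝ => ∑' k : Fin N → ℤ, f (fun i => (k i : ℝ) / w) *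
        ∏ i, avgKernel (χ i) m (w * Function.update t j s i - (k i : ℝ)))
      ((w / (m : ℝ)) * ∑' k : Fin N → ℤ, f (fun i => (k i : ℝ) / w) *
        (∏ i ∈ Finset.univ.erase j, avgKernel (χ i) m (w * t i - (k i : ℝ))) *
        (χ j (w * t j - (k j : ℝ) + (m : ℝ) / 2) - χ j (w * t j - (k j : ℝ) - (m : ℝ) / 2)))
      (t j) ∧
    |(w / (m : ℝ)) * ∑' k : Fin N → ℤ, f (fun i => (k i : ℝ) / w) *
        (∏ i ∈ Finset.univ.erase j, avgKernel (χ i) m (w * t i - (k i : ℝ))) *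
        (χ j (w * t j - (k j : ℝ) + (m : ℝ) / 2) - χ j (w * t j - (k j : ℝ) - (m : ℝ) / 2))| ≤
      (2 * w / (m : ℝ)) * M * ∏ i, ⨆ u : ℝ, ∑' k : ℤ, |χ i (u - (k : ℝ))| := by
  have hderiv := sampling_series_averaged_partial_deriv_general
    (fun i => .of_tendstoUniformlyOn (hc i) (hunif i)) hm (fun k => hf fun i => k i / w) w j t
  rwa [abs_of_pos hw] at hderiv
end

section
/- Let χ : ℝ^N → ℝ be bounded and measurable with χ(t) = 0 for t ∉ [−T,T]^N (some T > 0) and ∑_{k∈ℤ^N} χ(u−k) = 1 for every u ∈ ℝ^N; set A_χ := sup_u ∑_{k∈ℤ^N} |χ(u−k)| (< +∞). Let f : ℝ^N → ℝ be bounded and measurable and fix j ∈ {1,…,N}. Then for every w > 0 and every t ∈ ℝ^N, |(K_{w,j} f)(t) − f(t)| ≤ A_χ · sup{ |f(u) − f(v)| : u, v ∈ ∏_{i=1}^N [t_i − (T+1)/w, t_i + (T+1)/w] }. -/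
/-!
Since `∑ₖ χ(wt - k) = 1`, the error `(K_{w,j} f)(t) - f(t)` is the sum of the deviations of the cell
means of `f` from `f t`, weighted by `χ(wt - k)`. A nonzero weight forces `‖wt - k‖ ≤ T` in the sup
norm, so `k / w` is within `T / w` of `t`; the cell over which `f` is averaged then lies within
`(T + 1) / w` of `t`, and its mean deviates from `f t` by at most the oscillation of `f` there.
The weights add up in absolute value to at most `A_χ`, a finite supremum because the
number of integer points in a translate of `[-T, T]^N` is bounded.
-/

open MeasureTheory

/-- The `j`-th sampling-Kantorovich type operator based on a kernel `K : ℝ^N → ℝ`. -/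
noncomputable def kantOp {N : ℕ} (K : (Fin N → ℝ) → ℝ) (j : Fin N) (w : ℝ)
    (g : (Fin N → ℝ) → ℝ) (t : Fin N → ℝ) : ℝ :=
  ∑' k : Fin N → ℤ,
    (w * ∫ u in ((k j : ℝ) / w)..(((k j : ℝ) + 1) / w),
      g (Function.update (fun i => (k i : ℝ) / w) j u)) *
    K (fun i => w * t i - (k i : ℝ))

open Metric Set

section Oscillation

variable {α β : Type*} [PseudoMetricSpace β] {f : α → β} {s : Set α}

theorem diam_image_eq_sSup_dist (hf : Bornology.IsBounded (f '' s)) :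
    diam (f '' s) = sSup {d | ∃ u v, u ∈ s ∧ v ∈ s ∧ d = dist (f u) (f v)} := by
  have hle : ∀ d ∈ {d | ∃ u v, u ∈ s ∧ v ∈ s ∧ d = dist (f u) (f v)}, d ≤ diam (f '' s) := by
    rintro _ ⟨u, v, hu, hv, rfl⟩
    exact dist_le_diam_of_mem hf (mem_image_of_mem f hu) (mem_image_of_mem f hv)
  refine le_antisymm (diam_le_of_forall_dist_le ?_ ?_) (Real.sSup_le hle diam_nonneg)
  · apply Real.sSup_nonneg
    rintro _ ⟨u, v, -, -, rfl⟩
    exact dist_nonneg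
  · rintro _ ⟨u, hu, rfl⟩ _ ⟨v, hv, rfl⟩
    exact le_csSup ⟨_, hle⟩ ⟨u, v, hu, hv, rfl⟩

end Oscillation

section Averages

variable {α E : Type*} [NormedAddCommGroup E] [NormedSpace ℝ E] [CompleteSpace E]

theorem norm_setAverage_sub_le [MeasurableSpace α] {μ : Measure α} {s : Set α} {g : α → E} {c : E}
    {ε : ℝ} (hμ₀ : μ s ≠ 0) (hμ : μ s ≠ ⊤) (hg : AEStronglyMeasurable g (μ.restrict s))
    (h : ∀ᵐ x ∂μ.restrict s, ‖g x - c‖ ≤ ε) : ‖(⨍ x in s, g x ∂μ) - c‖ ≤ ε := by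
  have hint : IntegrableOn g s μ := by
    refine IntegrableOn.of_bound hμ.lt_top hg (‖c‖ + ε) ?_
    filter_upwards [h] with x hx
    linarith [norm_le_norm_add_norm_sub' (g x) c]
  exact mem_closedBall_iff_norm.1 <| (convex_closedBall c ε).set_average_mem isClosed_closedBall
    hμ₀ hμ (h.mono fun _ hx => mem_closedBall_iff_norm.2 hx) hint

theorem norm_tsum_smul_sub_le {p : α → ℝ} {a : α → E} {c : E} {ε : ℝ} (hp : HasSum p 1)
    (h : ∀ k, p k ≠ 0 → ‖a k - c‖ ≤ ε) : ‖∑' k, p k • a k - c‖ ≤ (∑' k, |p k|) * ε := by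
  have hle (k : α) : ‖p k • (a k - c)‖ ≤ |p k| * ε := by
    rw [norm_smul, Real.norm_eq_abs]
    rcases eq_or_ne (p k) 0 with hk | hk
    · simp [hk]
    · exact mul_le_mul_of_nonneg_left (h k hk) (abs_nonneg _)
  have hbound : HasSum (fun k => |p k| * ε) ((∑' k, |p k|) * ε) :=
    hp.summable.abs.hasSum.mul_right ε
  have hdev : Summable fun k => p k • (a k - c) := .of_norm_bounded hbound.summable hle
  have hsum : ∑' k, p k • a k = ∑' k, p k • (a k - c) + c := by
    have := hdev.hasSum.add (hp.smul_const c)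
    simpa only [← smul_add, sub_add_cancel, one_smul] using this.tsum_eq
  rw [hsum, add_sub_cancel_right]
  exact tsum_of_norm_bounded hbound hle

end Averages

section LatticeSums

theorem card_Icc_ceil_floor_le {R : Type*} [Ring R] [LinearOrder R] [IsStrictOrderedRing R]
    [FloorRing R] (a b : R) : (Finset.Icc ⌈a⌉ ⌊b⌋).card ≤ ⌊b - a⌋₊ + 1 := by
  have hsub : ⌊b⌋ - ⌈a⌉ ≤ ⌊b - a⌋ := by
    rw [Int.le_floor, Int.cast_sub]
    exact sub_le_sub (Int.floor_le b) (Int.le_ceil a)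
  rw [Int.card_Icc, ← Int.floor_toNat]
  lia

variable {ι E : Type*} [Fintype ι] [SeminormedAddCommGroup E] {χ : (ι → ℝ) → E} {T C : ℝ}

theorem tsum_norm_sub_intCast_le (hχ : Function.support χ ⊆ closedBall 0 T)
    (hC : ∀ s, ‖χ s‖ ≤ C) (u : ι → ℝ) :
    ∑' k : ι → ℤ, ‖χ (fun i => u i - k i)‖ ≤ (⌊2 * T⌋₊ + 1) ^ Fintype.card ι * C := by
  classical
  set S : Finset (ι → ℤ) := Finset.Icc (fun i => ⌈u i - T⌉) (fun i => ⌊u i + T⌋)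
  have hS (k : ι → ℤ) (hk : k ∉ S) : ‖χ (fun i => u i - k i)‖ = 0 := by
    contrapose! hk
    have hmem : ‖fun i => u i - k i‖ ≤ T :=
      mem_closedBall_zero_iff.1 <| hχ fun h => hk (by rw [h, norm_zero])
    have hcoord (i : ι) := abs_le.1 <| (norm_le_pi_norm (fun i => u i - k i) i).trans hmem
    refine Finset.mem_Icc.2 ⟨fun i => Int.ceil_le.2 ?_, fun i => Int.le_floor.2 ?_⟩ <;>
      linarith [hcoord i]
  have hcard : S.card ≤ (⌊2 * T⌋₊ + 1) ^ Fintype.card ι := by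
    rw [Pi.card_Icc]
    refine Finset.prod_le_pow_card _ _ _ fun i _ => (card_Icc_ceil_floor_le _ _).trans_eq ?_
    congr 2
    ring
  calc ∑' k : ι → ℤ, ‖χ (fun i => u i - k i)‖
      = ∑ k ∈ S, ‖χ (fun i => u i - k i)‖ := tsum_eq_sum hS
    _ ≤ S.card * C := by
      rw [← nsmul_eq_mul]
      exact Finset.sum_le_card_nsmul _ _ _ fun k _ => hC _
    _ ≤ (⌊2 * T⌋₊ + 1) ^ Fintype.card ι * C :=
      mul_le_mul_of_nonneg_right (mod_cast hcard) ((norm_nonneg _).trans (hC 0))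

end LatticeSums

section SamplePoints

variable {ι : Type*} [Fintype ι]

theorem mem_closedBall_pi_iff_forall_mem_Icc {x y : ι → ℝ} {r : ℝ} (hr : 0 ≤ r) :
    y ∈ closedBall x r ↔ ∀ i, y i ∈ Icc (x i - r) (x i + r) := by
  simp only [closedBall_pi x hr, Real.closedBall_eq_Icc, mem_univ_pi]

theorem dist_update_self [DecidableEq ι] {X : Type*} [PseudoMetricSpace X] (x : ι → X) (j : ι)
    (a : X) : dist (Function.update x j a) x = dist a (x j) := by
  apply le_antisymm
  · refine (dist_pi_le_iff dist_nonneg).2 fun i => ?_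
    rcases eq_or_ne i j with rfl | hij
    · rw [Function.update_self]
    · rw [Function.update_of_ne hij, dist_self]
      exact dist_nonneg
  · simpa only [Function.update_self] using dist_le_pi_dist (Function.update x j a) x j

theorem update_div_mem_closedBall [DecidableEq ι] {w T a : ℝ} (hw : 0 < w) {t x : ι → ℝ} {j : ι}
    (hx : ‖fun i => w * t i - x i‖ ≤ T) (ha : a ∈ Icc (x j / w) ((x j + 1) / w)) :
    Function.update (fun i => x i / w) j a ∈ closedBall t ((T + 1) / w) := by
  have hcell : dist a (x j / w) ≤ 1 / w := by
    rw [add_div] at ha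
    rw [Real.dist_eq, abs_of_nonneg] <;> linarith [ha.1, ha.2]
  have hnode : dist (fun i => x i / w) t ≤ T / w := by
    refine (dist_pi_le_iff (div_nonneg ((norm_nonneg _).trans hx) hw.le)).2 fun i => ?_
    have hi : |w * t i - x i| ≤ T := (norm_le_pi_norm (fun i => w * t i - x i) i).trans hx
    rwa [dist_comm, Real.dist_eq, sub_div' hw.ne', abs_div, abs_of_pos hw, mul_comm,
      div_le_div_iff_of_pos_right hw]
  calc dist (Function.update (fun i => x i / w) j a) t
      ≤ dist a (x j / w) + dist (fun i => x i / w) t :=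
        (dist_triangle _ _ _).trans (add_le_add_left (dist_update_self _ j a).le _)
    _ ≤ 1 / w + T / w := add_le_add hcell hnode
    _ = (T + 1) / w := by ring

theorem norm_average_cell_sub_le_diam [DecidableEq ι] {E : Type*} [NormedAddCommGroup E]
    [NormedSpace ℝ E] [CompleteSpace E] {f : (ι → ℝ) → E} {w T : ℝ} {t x : ι → ℝ}
    (hf : StronglyMeasurable f) (hfb : Bornology.IsBounded (f '' closedBall t ((T + 1) / w)))
    (hw : 0 < w) (hx : ‖fun i => w * t i - x i‖ ≤ T) (j : ι) :
    ‖(⨍ u in (x j / w)..((x j + 1) / w), f (Function.update (fun i => x i / w) j u)) - f t‖ ≤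
      diam (f '' closedBall t ((T + 1) / w)) := by
  have hlt : x j / w < (x j + 1) / w := by gcongr; exact lt_add_one _
  have ht : t ∈ closedBall t ((T + 1) / w) :=
    mem_closedBall_self <| div_nonneg (by linarith [(norm_nonneg _).trans hx]) hw.le
  rw [uIoc_of_le hlt.le]
  refine norm_setAverage_sub_le (by simpa using hlt) measure_Ioc_lt_top.ne
    (hf.comp_measurable (measurable_update _)).aestronglyMeasurable
    (ae_restrict_of_forall_mem measurableSet_Ioc fun u hu => ?_)
  rw [← dist_eq_norm]
  exact dist_le_diam_of_mem hfb
    (mem_image_of_mem f (update_div_mem_closedBall hw hx (Ioc_subset_Icc_self hu)))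
    (mem_image_of_mem f ht)

end SamplePoints

section Kantorovich

theorem kantOp_eq_tsum_smul_average {N : ℕ} (χ f : (Fin N → ℝ) → ℝ) (j : Fin N) (w : ℝ)
    (t : Fin N → ℝ) :
    kantOp χ j w f t = ∑' k : Fin N → ℤ, χ (fun i => w * t i - k i) •
      ⨍ u in (k j / w : ℝ)..(k j + 1) / w, f (Function.update (fun i => k i / w) j u) := by
  refine tsum_congr fun k => ?_
  rw [interval_average_eq, ← sub_div, add_sub_cancel_left, one_div, inv_inv, smul_eq_mul,
    smul_eq_mul, mul_comm]

theorem abs_kantOp_sub_le_tsum_mul_diam {N : ℕ} {T : ℝ}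
    {χ f : (Fin N → ℝ) → ℝ} {w : ℝ} {t : Fin N → ℝ}
    (hχ : Function.support χ ⊆ closedBall 0 T)
    (hpart : HasSum (fun k : Fin N → ℤ => χ (fun i => w * t i - k i)) 1)
    (hf : Measurable f) (hfb : Bornology.IsBounded (f '' closedBall t ((T + 1) / w)))
    (j : Fin N) (hw : 0 < w) :
    |kantOp χ j w f t - f t| ≤
      (∑' k : Fin N → ℤ, |χ (fun i => w * t i - k i)|) *
        diam (f '' closedBall t ((T + 1) / w)) := by
  rw [kantOp_eq_tsum_smul_average]
  exact norm_tsum_smul_sub_le hpart fun k hk =>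
    norm_average_cell_sub_le_diam hf.stronglyMeasurable hfb hw (mem_closedBall_zero_iff.1 (hχ hk)) j

theorem kantorovich_pointwise_oscillation_estimate_general {N : ℕ} {T C M : ℝ}
    {χ f : (Fin N → ℝ) → ℝ} {w : ℝ} {t : Fin N → ℝ} (hT : 0 ≤ T) (hχb : ∀ s, |χ s| ≤ C)
    (hsupp : ∀ s : Fin N → ℝ, (¬ ∀ i, s i ∈ Icc (-T) T) → χ s = 0)
    (hpart : HasSum (fun k : Fin N → ℤ => χ (fun i => w * t i - k i)) 1)
    (hf : Measurable f)
    (hfb : ∀ s : Fin N → ℝ,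
      (∀ i, s i ∈ Icc (t i - (T + 1) / w) (t i + (T + 1) / w)) → |f s| ≤ M)
    (j : Fin N) (hw : 0 < w) :
    |kantOp χ j w f t - f t| ≤
      (⨆ u : Fin N → ℝ, ∑' k : Fin N → ℤ, |χ (fun i => u i - k i)|) *
        sSup {d | ∃ u v : Fin N → ℝ,
          (∀ i, u i ∈ Icc (t i - (T + 1) / w) (t i + (T + 1) / w)) ∧
          (∀ i, v i ∈ Icc (t i - (T + 1) / w) (t i + (T + 1) / w)) ∧ d = |f u - f v|} := by
  have hχ : Function.support χ ⊆ closedBall 0 T := fun s hs =>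
    (mem_closedBall_pi_iff_forall_mem_Icc hT).2 <| by simpa using not_imp_comm.1 (hsupp s) hs
  have hbdd : BddAbove (range fun u : Fin N → ℝ => ∑' k : Fin N → ℤ, |χ (fun i => u i - k i)|) :=
    ⟨_, forall_mem_range.2 (tsum_norm_sub_intCast_le hχ hχb)⟩
  have hcube (s : Fin N → ℝ) := mem_closedBall_pi_iff_forall_mem_Icc (x := t) (y := s)
    (show 0 ≤ (T + 1) / w by positivity)
  have hfB : Bornology.IsBounded (f '' closedBall t ((T + 1) / w)) :=
    isBounded_iff_forall_norm_le.2 ⟨M, forall_mem_image.2 fun s hs => hfb s ((hcube s).1 hs)⟩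
  simp only [← hcube, ← Real.dist_eq (f _), ← diam_image_eq_sSup_dist hfB]
  exact (abs_kantOp_sub_le_tsum_mul_diam hχ hpart hf hfB j hw).trans <|
    mul_le_mul_of_nonneg_right (le_ciSup hbdd fun i => w * t i) diam_nonneg

end Kantorovich

/-- for a bounded measurable kernel `χ : ℝ^N → ℝ` supported in `[−T,T]^N` with
`∑_{k∈ℤ^N} χ(u−k) = 1` for all `u`, and a bounded measurable `f`, one has, for every `w > 0`
and every `t ∈ ℝ^N`,
`|(K_{w,j} f)(t) − f(t)| ≤ A_χ · sup { |f(u) − f(v)| : u,v ∈ ∏ᵢ [tᵢ − (T+1)/w, tᵢ + (T+1)/w] }`. -/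
theorem kantorovich_pointwise_oscillation_estimate
    (N : ℕ) (T : ℝ) (hT : 0 < T) (χ : (Fin N → ℝ) → ℝ)
    (hχm : Measurable χ) (C : ℝ) (hχb : ∀ s, |χ s| ≤ C)
    (hsupp : ∀ s : Fin N → ℝ, (¬ ∀ i, s i ∈ Set.Icc (-T) T) → χ s = 0)
    (hpart : ∀ u : Fin N → ℝ, HasSum (fun k : Fin N → ℤ => χ (fun i => u i - (k i : ℝ))) 1)
    (f : (Fin N → ℝ) → ℝ) (hfm : Measurable f) (M : ℝ) (hfb : ∀ s, |f s| ≤ M)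
    (j : Fin N) (w : ℝ) (hw : 0 < w) (t : Fin N → ℝ) :
    |kantOp χ j w f t - f t| ≤
      (⨆ u : Fin N → ℝ, ∑' k : Fin N → ℤ, |χ (fun i => u i - (k i : ℝ))|) *
        sSup {d : ℝ | ∃ u v : Fin N → ℝ,
          (∀ i, u i ∈ Set.Icc (t i - (T + 1) / w) (t i + (T + 1) / w)) ∧
          (∀ i, v i ∈ Set.Icc (t i - (T + 1) / w) (t i + (T + 1) / w)) ∧
          d = |f u - f v|} :=
  kantorovich_pointwise_oscillation_estimate_general hT.le hχb hsupp (hpart _) hfm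
    (fun s _ => hfb s) j hw
end

section
/- Let χ : ℝ^N → ℝ be bounded and measurable with χ(t) = 0 for t ∉ [−T,T]^N (some T > 0) and ∑_{k∈ℤ^N} χ(u−k) = 1 for every u ∈ ℝ^N. Let 1 ≤ p < +∞ and let f : ℝ^N → ℝ be bounded, measurable, continuous at almost every point of ℝ^N, and such that ‖f‖_{l^p(Σ)} < +∞ for every admissible sequence Σ (i.e. f ∈ Λ^p). Then for every j ∈ {1,…,N}, lim_{w→+∞} ‖K_{w,j} f − f‖_{L^p(ℝ^N)} = 0. -/
/-!
The weights `χ (w t - k)` sum to `1`, their absolute values sum to at most `D = C (2 T + 1) ^ N`,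
and only the `k` with `k / w` within `T / w` of `t` contribute; there the coefficient is a mean of
`f` over points within `(T + 1) / w` of `t`. Hence `|K_w f t - f t|` is at most `D` times the
supremum of `|f y - f t|` over `|y - t| ≤ (T + 1) / w`, which tends to `0` at every continuity
point of `f`.

For `w ≥ 1` the same bound dominates `|K_w f - f|` by `2 D` times any `g` with `|f y| ≤ g t`
whenever `|y - t| ≤ T + 1`. The `l^p(Σ)` condition supplies such a `g` in `L^p`: let `g ^ p` be
the sum over the cells `Q` of `Σ` of `sup_Q |f| ^ p` times the indicator of `Q` enlarged by `T + 1`.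
If the gaps of `Σ` are at least `δ`, the enlargement multiplies the volume by at most
`(1 + 2 (T + 1) / δ) ^ N`, so `g ^ p` is integrable. Dominated convergence concludes.
-/

open MeasureTheory
open scoped ENNReal

/-- An admissible partition of an axis: a sequence of points whose consecutive gaps are
bounded below by a positive constant and bounded above. -/
def AdmissiblePartition (x : ℤ → ℝ) : Prop :=
  (∃ δ : ℝ, 0 < δ ∧ ∀ n : ℤ, δ ≤ x n - x (n - 1)) ∧ (∃ Δ : ℝ, ∀ n : ℤ, x n - x (n - 1) ≤ Δ)

open Set Filter Metric Function
open scoped Topology Interval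

section DominatedConvergence

variable {α κ E : Type*} {mα : MeasurableSpace α} {μ : Measure α} [NormedAddCommGroup E]

theorem tendsto_eLpNorm_zero_of_dominated {l : Filter κ} [l.IsCountablyGenerated] {p : ℝ≥0∞}
    (hp : p ≠ ∞) {F : κ → α → E} {g : α → ℝ} (hF : ∀ᶠ n in l, AEStronglyMeasurable (F n) μ)
    (hg : MemLp g p μ) (hFg : ∀ᶠ n in l, ∀ᵐ a ∂μ, ‖F n a‖ ≤ g a)
    (hlim : ∀ᵐ a ∂μ, Tendsto (fun n => F n a) l (𝓝 0)) :
    Tendsto (fun n => eLpNorm (F n) p μ) l (𝓝 0) := by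
  rcases eq_or_ne p 0 with rfl | hp₀
  · simpa using tendsto_const_nhds
  have hp_pos : 0 < p.toReal := ENNReal.toReal_pos hp₀ hp
  have hlint : Tendsto (fun n => ∫⁻ a, ‖F n a‖ₑ ^ p.toReal ∂μ) l (𝓝 (∫⁻ _, 0 ∂μ)) := by
    refine tendsto_lintegral_filter_of_dominated_convergence' (fun a => ‖g a‖ₑ ^ p.toReal)
      (hF.mono fun n hn => hn.enorm.pow_const _) ?_
      (lintegral_rpow_enorm_lt_top_of_eLpNorm_lt_top hp₀ hp hg.eLpNorm_lt_top).ne ?_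
    · filter_upwards [hFg] with n hn
      filter_upwards [hn] with a ha
      gcongr
      exact enorm_le_iff_norm_le.2 (ha.trans (le_abs_self _))
    · filter_upwards [hlim] with a ha
      simpa [hp_pos] using ha.enorm.ennrpow_const p.toReal
  simpa [eLpNorm_eq_lintegral_rpow_enorm_toReal hp₀ hp, hp_pos]
    using hlint.ennrpow_const (1 / p.toReal)

end DominatedConvergence

theorem dist_tsum_mul_le {κ R : Type*} [NormedRing R] [CompleteSpace R] {a e : κ → R} {c : R}
    {b : ℝ} (he : HasSum e 1) (hs : Summable fun k => ‖e k‖)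
    (hb : ∀ k, e k ≠ 0 → dist (a k) c ≤ b) :
    dist (∑' k, a k * e k) c ≤ b * ∑' k, ‖e k‖ := by
  have hterm (k : κ) : ‖(a k - c) * e k‖ ≤ b * ‖e k‖ := by
    by_cases hk : e k = 0
    · simp [hk]
    · exact (norm_mul_le _ _).trans (by gcongr; simpa [dist_eq_norm] using hb k hk)
  have hsub : HasSum (fun k => a k * e k) (∑' k, (a k - c) * e k + c * 1) := by
    simpa [sub_mul] using
      (Summable.of_norm_bounded (hs.mul_left b) hterm).hasSum.add (he.mul_left c)
  rw [hsub.tsum_eq, mul_one, dist_eq_norm, add_sub_cancel_right]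
  exact tsum_of_norm_bounded (hs.hasSum.mul_left b) hterm

theorem dist_intervalAverage_le {E : Type*} [NormedAddCommGroup E] [NormedSpace ℝ E]
    [CompleteSpace E] {g : ℝ → E} {a b r : ℝ} {c : E} (hab : a < b)
    (hg : AEStronglyMeasurable g (volume.restrict (Ι a b)))
    (hr : ∀ u ∈ Ioc a b, dist (g u) c ≤ r) :
    dist (⨍ u in a..b, g u) c ≤ r := by
  rw [uIoc_of_le hab.le] at hg ⊢
  have hmem : ∀ᵐ u ∂volume.restrict (Ioc a b), g u ∈ closedBall c r :=
    ae_restrict_of_forall_mem measurableSet_Ioc hr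
  refine (convex_closedBall c r).set_average_mem isClosed_closedBall ?_ (by simp) hmem
    (.of_bound (by simp) hg (‖c‖ + r) ?_)
  · simpa using hab
  · filter_upwards [hmem] with u hu using norm_le_of_mem_closedBall hu

section Lattice

variable {ι : Type*} [Fintype ι]

/-- The lattice points `k ∈ ℤ^ι` in the closed cube of half-side `T` about `u`. -/
noncomputable def latticeCube [DecidableEq ι] (u : ι → ℝ) (T : ℝ) : Finset (ι → ℤ) :=
  Finset.Icc (fun i => ⌈u i - T⌉) fun i => ⌊u i + T⌋

theorem mem_latticeCube [DecidableEq ι] {u : ι → ℝ} {T : ℝ} {k : ι → ℤ} :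
    k ∈ latticeCube u T ↔ ∀ i, |u i - k i| ≤ T := by
  simp only [latticeCube, Finset.mem_Icc, Pi.le_def, ← forall_and, Int.ceil_le, Int.le_floor,
    abs_le]
  refine forall_congr' fun i => ?_
  constructor <;> rintro ⟨h₁, h₂⟩ <;> constructor <;> linarith

theorem card_latticeCube_le [DecidableEq ι] {T : ℝ} (hT : 0 ≤ T) (u : ι → ℝ) :
    ((latticeCube u T).card : ℝ) ≤ (2 * T + 1) ^ Fintype.card ι := by
  rw [latticeCube, Pi.card_Icc, Nat.cast_prod, ← Finset.card_univ, ← Finset.prod_const]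
  refine Finset.prod_le_prod (fun _ _ => Nat.cast_nonneg _) fun i _ => ?_
  rw [Int.card_Icc, ← Int.cast_natCast, Int.toNat_eq_max]
  push_cast
  exact max_le (by linarith [Int.le_ceil (u i - T), Int.floor_le (u i + T)]) (by positivity)

variable {E : Type*} [NormedAddCommGroup E] {χ : (ι → ℝ) → E} {T : ℝ}

theorem mem_latticeCube_of_kernel_ne_zero [DecidableEq ι] (hsupp : support χ ⊆ closedBall 0 T)
    {u : ι → ℝ} {k : ι → ℤ} (hk : χ (fun i => u i - k i) ≠ 0) : k ∈ latticeCube u T :=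
  mem_latticeCube.2 fun i =>
    (norm_le_pi_norm (fun i => u i - (k i : ℝ)) i).trans (mem_closedBall_zero_iff.1 (hsupp hk))

theorem summable_norm_kernel_translates (hsupp : support χ ⊆ closedBall 0 T) (u : ι → ℝ) :
    Summable fun k : ι → ℤ => ‖χ fun i => u i - k i‖ := by
  classical
  refine summable_of_ne_finset_zero (s := latticeCube u T) fun k hk => ?_
  simpa using mt (mem_latticeCube_of_kernel_ne_zero hsupp) hk

theorem tsum_norm_kernel_translates_le {C : ℝ} (hT : 0 ≤ T) (hχ : ∀ s, ‖χ s‖ ≤ C)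
    (hsupp : support χ ⊆ closedBall 0 T) (u : ι → ℝ) :
    ∑' k : ι → ℤ, ‖χ fun i => u i - k i‖ ≤ C * (2 * T + 1) ^ Fintype.card ι := by
  classical
  have hC : 0 ≤ C := (norm_nonneg _).trans (hχ 0)
  calc ∑' k : ι → ℤ, ‖χ fun i => u i - k i‖
      = ∑ k ∈ latticeCube u T, ‖χ fun i => u i - k i‖ := tsum_eq_sum fun k hk => by
        simpa using mt (mem_latticeCube_of_kernel_ne_zero hsupp) hk
    _ ≤ (latticeCube u T).card • C := Finset.sum_le_card_nsmul _ _ _ fun _ _ => hχ _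
    _ ≤ C * (2 * T + 1) ^ Fintype.card ι := by
        rw [nsmul_eq_mul, mul_comm]
        exact mul_le_mul_of_nonneg_left (card_latticeCube_le hT u) hC

end Lattice

section Partition

theorem exists_mem_Ico_pred_of_tendsto {α : Type*} [LinearOrder α] [NoMaxOrder α] {x : ℤ → α}
    (htop : Tendsto x atTop atTop) (hbot : Tendsto x atBot atBot) (t : α) :
    ∃ n, t ∈ Ico (x (n - 1)) (x n) := by
  obtain ⟨m, hm⟩ := eventually_atBot.1 (hbot.eventually_le_atBot t)
  obtain ⟨n, hn, hleast⟩ := Int.exists_least_of_bdd (P := fun n => t < x n)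
    ⟨m, fun n hn => le_of_not_ge fun h => (hm n h).not_gt hn⟩
    (htop.eventually_gt_atTop t).exists
  exact ⟨n, not_lt.1 fun h => (hleast _ h).not_gt (sub_one_lt n), hn⟩

variable {x : ℤ → ℝ} {δ : ℝ}

theorem monotone_sub_mul_intCast (hx : ∀ n, δ ≤ x n - x (n - 1)) :
    Monotone fun n : ℤ => x n - δ * n := by
  refine monotone_int_of_le_succ fun n => ?_
  have hgap := hx (n + 1)
  rw [add_sub_cancel_right] at hgap
  push_cast
  linarith

theorem exists_mem_Ico_pred_of_le_sub (hδ : 0 < δ) (hx : ∀ n, δ ≤ x n - x (n - 1)) (t : ℝ) :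
    ∃ n, t ∈ Ico (x (n - 1)) (x n) := by
  have hmono := monotone_sub_mul_intCast hx
  refine exists_mem_Ico_pred_of_tendsto ?_ ?_ t
  · refine tendsto_atTop_mono' _ ?_ (tendsto_atTop_add_const_left _ (x 0)
      (tendsto_intCast_atTop_atTop.const_mul_atTop hδ))
    filter_upwards [eventually_ge_atTop 0] with n hn
    simpa [le_sub_iff_add_le] using hmono hn
  · refine tendsto_atBot_mono' _ ?_ (tendsto_atBot_add_const_left _ (x 0)
      ((tendsto_intCast_atBot_iff.2 tendsto_id).const_mul_atBot hδ))
    filter_upwards [eventually_le_atBot 0] with n hn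
    simpa [sub_le_iff_le_add] using hmono hn

end Partition

section UpperSum

variable {ι : Type*} {x : ι → ℤ → ℝ} {δ R : ℝ} {h : (ι → ℝ) → ℝ≥0∞}

/-- The cell `Q_k` of the product of the partitions `x i`. -/
def gridCell (x : ι → ℤ → ℝ) (k : ι → ℤ) : Set (ι → ℝ) :=
  univ.pi fun i => Ico (x i (k i - 1)) (x i (k i))

/-- The cell `Q_k` enlarged by `R` in every coordinate direction, so that it contains every point
at (sup-norm) distance at most `R` from `Q_k`. -/
def enlargedCell (x : ι → ℤ → ℝ) (R : ℝ) (k : ι → ℤ) : Set (ι → ℝ) :=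
  univ.pi fun i => Icc (x i (k i - 1) - R) (x i (k i) + R)

/-- The function equal to the supremum of `h` over `Q_k` on the enlarged cell of each `Q_k`, the
values adding up where enlarged cells overlap. It dominates `h` uniformly on balls of radius
`R`. -/
noncomputable def gridMajorant (x : ι → ℤ → ℝ) (R : ℝ) (h : (ι → ℝ) → ℝ≥0∞) (t : ι → ℝ) : ℝ≥0∞ :=
  ∑' k, (enlargedCell x R k).indicator (fun _ => ⨆ y ∈ gridCell x k, h y) t

theorem exists_mem_gridCell (hδ : 0 < δ) (hx : ∀ i n, δ ≤ x i n - x i (n - 1)) (y : ι → ℝ) :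
    ∃ k, y ∈ gridCell x k := by
  choose k hk using fun i => exists_mem_Ico_pred_of_le_sub hδ (hx i) (y i)
  exact ⟨k, fun i _ => hk i⟩

theorem measurableSet_enlargedCell [Countable ι] (k : ι → ℤ) : MeasurableSet (enlargedCell x R k) :=
  .univ_pi fun _ => measurableSet_Icc

theorem measurable_gridMajorant [Finite ι] : Measurable (gridMajorant x R h) :=
  .tsum fun k => measurable_const.indicator (measurableSet_enlargedCell k)

variable [Fintype ι]

/-- The upper Darboux sum of `h` over the grid; for `h = |f| ^ p` it is the `p`-th power of the
`l^p(Σ)`-norm of `f`. -/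
noncomputable def upperGridSum (x : ι → ℤ → ℝ) (h : (ι → ℝ) → ℝ≥0∞) : ℝ≥0∞ :=
  ∑' k, (⨆ y ∈ gridCell x k, h y) * volume (gridCell x k)

theorem upperGridSum_ofReal_ne_top {h : (ι → ℝ) → ℝ} (hx : ∀ i n, x i (n - 1) ≤ x i n)
    (hbdd : ∀ k, BddAbove (h '' gridCell x k))
    (hs : Summable fun k => sSup (h '' gridCell x k) * ∏ i, (x i (k i) - x i (k i - 1))) :
    upperGridSum x (fun y => ENNReal.ofReal (h y)) ≠ ∞ := by
  have hgap (k : ι → ℤ) (i : ι) : 0 ≤ x i (k i) - x i (k i - 1) := sub_nonneg.2 (hx i (k i))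
  refine ne_top_of_le_ne_top hs.tsum_ofReal_ne_top (ENNReal.tsum_le_tsum fun k => ?_)
  rw [ENNReal.ofReal_mul' (Finset.prod_nonneg fun i _ => hgap k i),
    ENNReal.ofReal_prod_of_nonneg fun i _ => hgap k i, gridCell, Real.volume_pi_Ico]
  gcongr
  exact iSup₂_le fun y hy => ENNReal.ofReal_le_ofReal (le_csSup (hbdd k) (mem_image_of_mem h hy))

theorem mem_enlargedCell {k : ι → ℤ} {y t : ι → ℝ} (hy : y ∈ gridCell x k)
    (hyt : y ∈ closedBall t R) : t ∈ enlargedCell x R k := fun i _ => by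
  have hi := abs_le.1 ((dist_le_pi_dist y t i).trans hyt)
  have hyi := hy i trivial
  exact ⟨by linarith [hyi.1], by linarith [hyi.2]⟩

theorem le_gridMajorant (hδ : 0 < δ) (hx : ∀ i n, δ ≤ x i n - x i (n - 1)) {y t : ι → ℝ}
    (hyt : y ∈ closedBall t R) : h y ≤ gridMajorant x R h t := by
  obtain ⟨k, hk⟩ := exists_mem_gridCell hδ hx y
  calc h y ≤ ⨆ y ∈ gridCell x k, h y := le_iSup₂ (f := fun y _ => h y) y hk
    _ = (enlargedCell x R k).indicator (fun _ => ⨆ y ∈ gridCell x k, h y) t :=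
        (indicator_of_mem (mem_enlargedCell hk hyt) fun _ => ⨆ y ∈ gridCell x k, h y).symm
    _ ≤ gridMajorant x R h t := ENNReal.le_tsum k

theorem volume_enlargedCell_le (hδ : 0 < δ) (hx : ∀ i n, δ ≤ x i n - x i (n - 1)) (hR : 0 ≤ R)
    (k : ι → ℤ) :
    volume (enlargedCell x R k) ≤
      ENNReal.ofReal (1 + 2 * R / δ) ^ Fintype.card ι * volume (gridCell x k) := by
  rw [enlargedCell, gridCell, pi_univ_Icc, Real.volume_Icc_pi, Real.volume_pi_Ico,
    ← Finset.card_univ, ← Finset.prod_const, ← Finset.prod_mul_distrib]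
  refine Finset.prod_le_prod' fun i _ => ?_
  rw [← ENNReal.ofReal_mul (by positivity)]
  refine ENNReal.ofReal_le_ofReal ?_
  have hscale : 2 * R ≤ 2 * R / δ * (x i (k i) - x i (k i - 1)) := by
    calc 2 * R = 2 * R / δ * δ := by field_simp
      _ ≤ _ := by gcongr; exact hx i (k i)
  linarith

theorem lintegral_gridMajorant_le (hδ : 0 < δ) (hx : ∀ i n, δ ≤ x i n - x i (n - 1))
    (hR : 0 ≤ R) :
    ∫⁻ t, gridMajorant x R h t ≤
      ENNReal.ofReal (1 + 2 * R / δ) ^ Fintype.card ι * upperGridSum x h := by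
  simp only [gridMajorant]
  rw [lintegral_tsum fun k =>
    (measurable_const.indicator (measurableSet_enlargedCell k)).aemeasurable, upperGridSum,
    ← ENNReal.tsum_mul_left]
  refine ENNReal.tsum_le_tsum fun k => ?_
  rw [lintegral_indicator_const (measurableSet_enlargedCell k), mul_left_comm]
  gcongr
  exact volume_enlargedCell_le hδ hx hR k

theorem exists_memLp_forall_closedBall_norm_le {E : Type*} [NormedAddCommGroup E]
    {f : (ι → ℝ) → E} {p : ℝ} (hp : 0 < p) (hδ : 0 < δ) (hx : ∀ i n, δ ≤ x i n - x i (n - 1))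
    (hR : 0 ≤ R) (hf : upperGridSum x (fun y => ‖f y‖ₑ ^ p) ≠ ∞) :
    ∃ g : (ι → ℝ) → ℝ, MemLp g (ENNReal.ofReal p) volume ∧
      ∀ᵐ t, ∀ y ∈ closedBall t R, ‖f y‖ ≤ g t := by
  set G := gridMajorant x R fun y => ‖f y‖ₑ ^ p
  have hGm : Measurable G := measurable_gridMajorant
  have hG_lint : ∫⁻ t, G t ≠ ∞ :=
    ne_top_of_le_ne_top (ENNReal.mul_ne_top (by simp) hf) (lintegral_gridMajorant_le hδ hx hR)
  have hG_ae : ∀ᵐ t, G t < ∞ := ae_lt_top hGm hG_lint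
  refine ⟨fun t => (G t ^ p⁻¹).toReal, ⟨(hGm.pow_const _).ennreal_toReal.aestronglyMeasurable, ?_⟩,
    ?_⟩
  · rw [eLpNorm_lt_top_iff_lintegral_rpow_enorm_lt_top (by simpa) (by simp),
      ENNReal.toReal_ofReal hp.le]
    refine (lintegral_mono fun t => ?_).trans_lt hG_lint.lt_top
    rw [← ENNReal.le_rpow_inv_iff hp, Real.enorm_of_nonneg ENNReal.toReal_nonneg]
    exact ENNReal.ofReal_toReal_le
  · filter_upwards [hG_ae] with t ht y hy
    rw [← toReal_enorm]
    refine ENNReal.toReal_mono (ENNReal.rpow_ne_top_of_nonneg (by positivity) ht.ne) ?_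
    exact (ENNReal.le_rpow_inv_iff hp).2 (le_gridMajorant hδ hx hy)

end UpperSum

section Kantorovich

variable {N : ℕ} {χ f : (Fin N → ℝ) → ℝ} {C T b c w : ℝ} {t : Fin N → ℝ} {j : Fin N}

/-- The coefficient of the translate `χ (w t - k)` in `kantOp χ j w f`: the mean of `f` over the
segment of length `1 / w` that starts at `k / w` and runs in the `j`-th direction. -/
noncomputable def kantMean (j : Fin N) (w : ℝ) (f : (Fin N → ℝ) → ℝ) (k : Fin N → ℤ) : ℝ :=
  w * ∫ u in ((k j : ℝ) / w)..(((k j : ℝ) + 1) / w),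
    f (update (fun i => (k i : ℝ) / w) j u)

theorem kantMean_eq_intervalAverage (hw : w ≠ 0) (k : Fin N → ℤ) :
    kantMean j w f k =
      ⨍ u in ((k j : ℝ) / w)..(((k j : ℝ) + 1) / w), f (update (fun i => (k i : ℝ) / w) j u) := by
  rw [kantMean, interval_average_eq, smul_eq_mul]
  congr 1
  field_simp
  ring

theorem dist_kantMean_le (hw : 0 < w) (hf : Measurable f) {k : Fin N → ℤ} {r : ℝ}
    (hk : dist (fun i => (k i : ℝ) / w) t ≤ r)
    (hb : ∀ y ∈ closedBall t (r + 1 / w), dist (f y) c ≤ b) :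
    dist (kantMean j w f k) c ≤ b := by
  rw [kantMean_eq_intervalAverage hw.ne']
  refine dist_intervalAverage_le (by gcongr; linarith)
    (hf.comp (measurable_update _)).aestronglyMeasurable fun u hu => hb _ ?_
  have hupdate : dist (update (fun i => (k i : ℝ) / w) j u) (fun i => (k i : ℝ) / w) ≤ 1 / w := by
    refine (dist_pi_le_iff (by positivity)).2 fun i => ?_
    rcases eq_or_ne i j with rfl | hij
    · rw [update_self, Real.dist_eq, abs_of_nonneg (by linarith [hu.1]), sub_le_iff_le_add,
        ← add_div, add_comm]
      exact hu.2
    · simpa [update_of_ne hij] using hw.le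
  rw [mem_closedBall, add_comm]
  exact (dist_triangle _ _ _).trans (add_le_add hupdate hk)

theorem measurable_kantOp (hχ : Measurable χ) : Measurable (kantOp χ j w f) :=
  .tsum fun _ => (hχ.comp (by fun_prop)).const_mul _

theorem dist_kantOp_le (hT : 0 ≤ T) (hχC : ∀ s, |χ s| ≤ C) (hsupp : support χ ⊆ closedBall 0 T)
    (hpart : ∀ u : Fin N → ℝ, HasSum (fun k : Fin N → ℤ => χ fun i => u i - k i) 1)
    (hf : Measurable f) (hw : 0 < w) (hb : ∀ y ∈ closedBall t ((T + 1) / w), dist (f y) c ≤ b) :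
    dist (kantOp χ j w f t) c ≤ C * (2 * T + 1) ^ N * b := by
  have hb₀ : 0 ≤ b := dist_nonneg.trans (hb t (mem_closedBall_self (by positivity)))
  have hmean (k : Fin N → ℤ) (hk : χ (fun i => w * t i - k i) ≠ 0) :
      dist (kantMean j w f k) c ≤ b := by
    refine dist_kantMean_le (r := T / w) hw hf ?_ (by rwa [← add_div])
    refine (dist_pi_le_iff (by positivity)).2 fun i => ?_
    have hki := mem_latticeCube.1 (mem_latticeCube_of_kernel_ne_zero (u := fun i => w * t i)
      hsupp hk) i
    have hscale : (k i : ℝ) / w - t i = (k i - w * t i) / w := by field_simp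
    rw [Real.dist_eq, hscale, abs_div, abs_of_pos hw, abs_sub_comm]
    gcongr
  calc dist (kantOp χ j w f t) c
      ≤ b * ∑' k : Fin N → ℤ, ‖χ fun i => w * t i - k i‖ :=
        dist_tsum_mul_le (hpart _) (summable_norm_kernel_translates hsupp fun i => w * t i) hmean
    _ ≤ b * (C * (2 * T + 1) ^ N) := by
        gcongr
        simpa using tsum_norm_kernel_translates_le hT hχC hsupp fun i => w * t i
    _ = C * (2 * T + 1) ^ N * b := mul_comm _ _

theorem tendsto_kantOp_of_continuousAt (hT : 0 ≤ T) (hχC : ∀ s, |χ s| ≤ C)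
    (hsupp : support χ ⊆ closedBall 0 T)
    (hpart : ∀ u : Fin N → ℝ, HasSum (fun k : Fin N → ℤ => χ fun i => u i - k i) 1)
    (hf : Measurable f) (hft : ContinuousAt f t) :
    Tendsto (fun w => kantOp χ j w f t) atTop (𝓝 (f t)) := by
  refine Metric.tendsto_nhds.2 fun ε hε => ?_
  obtain ⟨η, hη, hηε⟩ := exists_pos_mul_lt hε (C * (2 * T + 1) ^ N)
  obtain ⟨δ, hδ, hball⟩ := Metric.continuousAt_iff.1 hft η hη
  have hradius : Tendsto (fun w : ℝ => (T + 1) / w) atTop (𝓝 0) :=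
    tendsto_const_nhds.div_atTop tendsto_id
  filter_upwards [eventually_gt_atTop 0, hradius.eventually_lt_const hδ] with w hw hwδ
  exact (dist_kantOp_le hT hχC hsupp hpart hf hw fun y hy =>
    (hball (hy.trans_lt hwδ)).le).trans_lt hηε

theorem norm_kantOp_sub_le (hT : 0 ≤ T) (hχC : ∀ s, |χ s| ≤ C)
    (hsupp : support χ ⊆ closedBall 0 T)
    (hpart : ∀ u : Fin N → ℝ, HasSum (fun k : Fin N → ℤ => χ fun i => u i - k i) 1)
    (hf : Measurable f) (hw : 1 ≤ w) (hb : ∀ y ∈ closedBall t (T + 1), ‖f y‖ ≤ b) :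
    ‖kantOp χ j w f t - f t‖ ≤ C * (2 * T + 1) ^ N * 2 * b := by
  have hft := hb t (mem_closedBall_self (by positivity))
  rw [← dist_eq_norm, mul_assoc]
  refine dist_kantOp_le hT hχC hsupp hpart hf (by positivity) fun y hy => ?_
  have hfy := hb y (closedBall_subset_closedBall (div_le_self (by positivity) hw) hy)
  linarith [dist_le_norm_add_norm (f y) (f t)]

theorem kantorovich_Lp_convergence_general (hT : 0 ≤ T) (hχ : Measurable χ)
    (hχC : ∀ s, |χ s| ≤ C) (hsupp : support χ ⊆ closedBall 0 T)
    (hpart : ∀ u : Fin N → ℝ, HasSum (fun k : Fin N → ℤ => χ fun i => u i - k i) 1)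
    {p : ℝ} (hp : 0 < p) (hf : Measurable f) (hfc : ∀ᵐ t, ContinuousAt f t)
    {x : Fin N → ℤ → ℝ} {δ : ℝ} (hδ : 0 < δ) (hx : ∀ i n, δ ≤ x i n - x i (n - 1))
    (hfx : upperGridSum x (fun y => ‖f y‖ₑ ^ p) ≠ ∞) (j : Fin N) :
    Tendsto (fun w => eLpNorm (fun t => kantOp χ j w f t - f t) (ENNReal.ofReal p) volume)
      atTop (𝓝 0) := by
  obtain ⟨g, hg, hfg⟩ := exists_memLp_forall_closedBall_norm_le hp hδ hx
    (by positivity : 0 ≤ T + 1) hfx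
  refine tendsto_eLpNorm_zero_of_dominated ENNReal.ofReal_ne_top
    (.of_forall fun w => ((measurable_kantOp hχ).sub hf).aestronglyMeasurable)
    (hg.const_mul (C * (2 * T + 1) ^ N * 2)) ?_ ?_
  · filter_upwards [eventually_ge_atTop 1] with w hw
    filter_upwards [hfg] with t ht
    exact norm_kantOp_sub_le hT hχC hsupp hpart hf hw ht
  · filter_upwards [hfc] with t ht
    exact tendsto_sub_nhds_zero_iff.2 (tendsto_kantOp_of_continuousAt hT hχC hsupp hpart hf ht)

end Kantorovich

theorem support_subset_closedBall_zero {ι E : Type*} [Fintype ι] [Zero E] {χ : (ι → ℝ) → E} {T : ℝ}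
    (hT : 0 ≤ T) (hχ : ∀ s : ι → ℝ, (¬∀ i, s i ∈ Icc (-T) T) → χ s = 0) :
    support χ ⊆ closedBall 0 T := by
  refine support_subset_iff'.2 fun s hs => hχ s fun h => hs ?_
  rw [mem_closedBall_zero_iff, pi_norm_le_iff_of_nonneg hT]
  exact fun i => abs_le.2 (h i)

theorem admissiblePartition_intCast : AdmissiblePartition fun n => (n : ℝ) :=
  ⟨⟨1, one_pos, fun n => by simp⟩, 1, fun n => by simp⟩

theorem AdmissiblePartition.le {x : ℤ → ℝ} (hx : AdmissiblePartition x) (n : ℤ) :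
    x (n - 1) ≤ x n := by
  obtain ⟨⟨δ, hδ, hgap⟩, -⟩ := hx
  linarith [hgap n]

theorem upperGridSum_enorm_rpow_ne_top {ι : Type*} [Fintype ι] {x : ι → ℤ → ℝ}
    {f : (ι → ℝ) → ℝ} {M p : ℝ} (hx : ∀ i, AdmissiblePartition (x i)) (hp : 0 ≤ p)
    (hfM : ∀ y, |f y| ≤ M)
    (hs : Summable fun k : ι → ℤ =>
      sSup {d : ℝ | ∃ y : ι → ℝ,
          (∀ i, y i ∈ Ico (x i (k i - 1)) (x i (k i))) ∧ d = |f y| ^ p} *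
        ∏ i, (x i (k i) - x i (k i - 1))) :
    upperGridSum x (fun y => ‖f y‖ₑ ^ p) ≠ ∞ := by
  have himage (k : ι → ℤ) : {d : ℝ | ∃ y : ι → ℝ,
      (∀ i, y i ∈ Ico (x i (k i - 1)) (x i (k i))) ∧ d = |f y| ^ p} =
        (fun y => |f y| ^ p) '' gridCell x k := by
    simp only [gridCell, image, mem_univ_pi, eq_comm]
  have hofReal (y : ι → ℝ) : ‖f y‖ₑ ^ p = ENNReal.ofReal (|f y| ^ p) := by
    rw [Real.enorm_eq_ofReal_abs, ENNReal.ofReal_rpow_of_nonneg (abs_nonneg _) hp]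
  simp only [himage] at hs
  simp only [hofReal]
  refine upperGridSum_ofReal_ne_top (fun i => (hx i).le) (fun k => ⟨M ^ p, ?_⟩) hs
  rintro _ ⟨y, -, rfl⟩
  exact Real.rpow_le_rpow (abs_nonneg _) (hfM y) hp

/-- for a bounded measurable kernel `χ : ℝ^N → ℝ` supported in `[−T,T]^N` with
`∑_{k∈ℤ^N} χ(u−k) = 1` for all `u`, `1 ≤ p < ∞`, and `f : ℝ^N → ℝ` bounded, measurable,
continuous at almost every point and belonging to `Λ^p` (finite `l^p(Σ)`-norm for every
admissible sequence `Σ`), one has `lim_{w→∞} ‖K_{w,j} f − f‖_{L^p} = 0` for every `j`. -/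
theorem kantorovich_Lp_convergence
    (N : ℕ) (T : ℝ) (hT : 0 < T) (χ : (Fin N → ℝ) → ℝ)
    (hχm : Measurable χ) (C : ℝ) (hχb : ∀ s, |χ s| ≤ C)
    (hsupp : ∀ s : Fin N → ℝ, (¬ ∀ i, s i ∈ Set.Icc (-T) T) → χ s = 0)
    (hpart : ∀ u : Fin N → ℝ, HasSum (fun k : Fin N → ℤ => χ (fun i => u i - (k i : ℝ))) 1)
    (p : ℝ) (hp : 1 ≤ p)
    (f : (Fin N → ℝ) → ℝ) (hfm : Measurable f) (M : ℝ) (hfb : ∀ s, |f s| ≤ M)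
    (hfc : ∀ᵐ x : Fin N → ℝ, ContinuousAt f x)
    (hΛ : ∀ x : Fin N → ℤ → ℝ, (∀ i, AdmissiblePartition (x i)) →
      Summable (fun k : Fin N → ℤ =>
        sSup {d : ℝ | ∃ y : Fin N → ℝ,
            (∀ i, y i ∈ Set.Ico (x i (k i - 1)) (x i (k i))) ∧ d = |f y| ^ p} *
          ∏ i, (x i (k i) - x i (k i - 1))))
    (j : Fin N) :
    Filter.Tendsto
      (fun w : ℝ => eLpNorm (fun t => kantOp χ j w f t - f t) (ENNReal.ofReal p) volume)
      Filter.atTop (nhds 0) := by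
  have hsum : upperGridSum (fun _ n => (n : ℝ)) (fun y => ‖f y‖ₑ ^ p) ≠ ∞ :=
    upperGridSum_enorm_rpow_ne_top (fun _ => admissiblePartition_intCast) (by linarith) hfb
      (hΛ _ fun _ => admissiblePartition_intCast)
  exact kantorovich_Lp_convergence_general hT.le hχm hχb
    (support_subset_closedBall_zero hT.le hsupp) hpart (by linarith) hfm hfc one_pos (by simp)
    hsum j
end
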